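/- Let g(z) = exp(az²/2) and f(z) = exp(bz²/2) with a, b > 0 and ab < 1. Then the formal differential operator g(d/dz) applied to f satisfies g(d/dz) f = (1−ab)^{−1/2} exp( (b/(2(1−ab))) z² ), where g(d/dz) f is defined by applying the power series of g in d/dz termwise to f and summing (the series converging locally uniformly). -/

import Mathlib

open Complex

noncomputable section

/-- The heat flow of the Gaussian. -/
def uu (b t z : ℂ) : ℂ := Complex.exp (-(Complex.log (1 - t * b)) / 2 + b * z ^ 2 / 2 * (1 - t * b)⁻¹)

/-- The `z`-derivatives of `uu`, through the Hermite recurrence. -/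
def vv (b t z : ℂ) : ℕ → ℂ
  | 0 => uu b t z
  | 1 => b * (1 - t * b)⁻¹ * z * uu b t z
  | (m + 2) => b * (1 - t * b)⁻¹ * (z * vv b t z (m + 1) + (m + 1) * vv b t z m)

theorem uu_z (b t z : ℂ) : HasDerivAt (fun w => uu b t w) (b * (1 - t * b)⁻¹ * z * uu b t z) z := by
  unfold uu
  have h := ((((hasDerivAt_id z).pow 2).const_mul (b / 2 * (1 - t * b)⁻¹)).const_add
    (-(Complex.log (1 - t * b)) / 2)).cexp
  convert h using 1
  · rfl
  · funext w
    simp only [id, Pi.pow_apply]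
    congr 1
    ring
  · simp only [id, Pi.pow_apply]
    rw [show b * z ^ 2 / 2 * (1 - t * b)⁻¹ = b / 2 * (1 - t * b)⁻¹ * z ^ 2 by ring]
    push_cast
    ring

theorem vv_z (b t : ℂ) (m : ℕ) : ∀ z, HasDerivAt (fun w => vv b t w m) (vv b t z (m + 1)) z := by
  induction m using Nat.twoStepInduction with
  | zero => intro z; simpa only [vv] using uu_z b t z
  | one =>
    intro z
    simp only [vv]
    have h := ((hasDerivAt_id z).const_mul (b * (1 - t * b)⁻¹)).mul (uu_z b t z)
    refine h.congr_deriv ?_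
    simp only [id]
    push_cast
    ring
  | more m h0 h1 =>
    intro z
    have h := (((hasDerivAt_id z).mul (h1 z)).add ((h0 z).const_mul ((m : ℂ) + 1))).const_mul
      (b * (1 - t * b)⁻¹)
    have e : vv b t z (m + 2 + 1) = b * (1 - t * b)⁻¹ *
      (z * vv b t z (m + 2) + ((m + 1 : ℕ) + 1) * vv b t z (m + 1)) := by rw [vv]
    rw [e]
    simp only [vv] at h ⊢
    refine h.congr_deriv ?_
    simp only [id]
    push_cast
    ring

theorem rr_t (b t : ℂ) (ht : 1 - t * b ∈ slitPlane) :
    HasDerivAt (fun s => b * (1 - s * b)⁻¹) (b ^ 2 * ((1 - t * b)⁻¹) ^ 2) t := by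
  have h := (((((hasDerivAt_id t).mul_const b).const_sub 1).fun_inv
    (slitPlane_ne_zero ht))).const_mul b
  refine h.congr_deriv ?_
  simp only [id]
  field_simp

theorem uu_t (b t z : ℂ) (ht : 1 - t * b ∈ slitPlane) :
    HasDerivAt (fun s => uu b s z) (1 / 2 * vv b t z 2) t := by
  have h1 := (((hasDerivAt_id t).mul_const b).const_sub 1).clog ht
  have h := ((h1.neg.div_const 2).add ((rr_t b t ht).const_mul (z ^ 2 / 2))).cexp
  have e : (fun s => uu b s z) = fun s => Complex.exp (-(Complex.log (1 - s * b)) / 2 +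
      z ^ 2 / 2 * (b * (1 - s * b)⁻¹)) := by
    funext s
    unfold uu
    congr 1
    ring
  have e' := congrFun e t
  rw [e]
  simp only [vv]
  rw [e']
  refine h.congr_deriv ?_
  have := slitPlane_ne_zero ht
  simp only [id, Pi.add_apply, Pi.neg_apply]
  push_cast
  ring

theorem vv_t (b t z : ℂ) (ht : 1 - t * b ∈ slitPlane) (m : ℕ) :
    HasDerivAt (fun s => vv b s z m) (1 / 2 * vv b t z (m + 2)) t := by
  induction m using Nat.twoStepInduction with
  | zero => simpa only [vv] using uu_t b t z ht
  | one =>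
    have h := ((rr_t b t ht).mul_const z).mul (uu_t b t z ht)
    simp only [vv] at h ⊢
    refine h.congr_deriv ?_
    push_cast
    ring
  | more m h0 h1 =>
    have h := (rr_t b t ht).mul ((h1.const_mul z).add (h0.const_mul ((m : ℂ) + 1)))
    have e : vv b t z (m + 2 + 2) = b * (1 - t * b)⁻¹ *
      (z * vv b t z (m + 1 + 2) + ((m + 2 : ℕ) + 1) * vv b t z (m + 2)) := by rw [vv]
    have e2 : vv b t z (m + 2) = b * (1 - t * b)⁻¹ *
      (z * vv b t z (m + 1) + (m + 1) * vv b t z m) := by rw [vv]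
    have e3 : (fun s => vv b s z (m + 2)) = fun s => b * (1 - s * b)⁻¹ *
      (z * vv b s z (m + 1) + (m + 1) * vv b s z m) := by funext s; rw [vv]
    rw [e, e3]
    refine h.congr_deriv ?_
    simp only [Pi.add_apply]
    generalize vv b t z (m + 1 + 2) = A at *
    rw [e2]
    push_cast
    ring

theorem iter_z (b t : ℂ) (m : ℕ) : iteratedDeriv m (fun w => vv b t w 0) = fun w => vv b t w m := by
  induction m with
  | zero => simp
  | succ m ih =>
    rw [iteratedDeriv_succ, ih]
    funext z
    exact (vv_z b t m z).deriv

theorem mem_slit (b : ℝ) (hb : 0 < b) (t : ℂ) (ht : t ∈ Metric.ball (0 : ℂ) (1 / b)) :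
    1 - t * b ∈ slitPlane := by
  left
  have h : ‖t‖ < 1 / b := by simpa using ht
  have h1 := (Complex.re_le_norm t)
  rw [lt_div_iff₀ hb] at h
  have : t.re * b ≤ ‖t‖ * b := by gcongr
  simp
  linarith

theorem iter_t (b : ℝ) (hb : 0 < b) (z : ℂ) (n : ℕ) : ∀ t ∈ Metric.ball (0 : ℂ) (1 / b),
    iteratedDeriv n (fun s => vv b s z 0) t = (1 / 2) ^ n * vv b t z (2 * n) := by
  induction n with
  | zero => simp
  | succ n ih =>
    intro t ht
    rw [iteratedDeriv_succ]
    have : iteratedDeriv n (fun s => vv b s z 0) =ᶠ[nhds t]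
        fun s => (1 / 2) ^ n * vv b s z (2 * n) :=
      Filter.eventuallyEq_of_mem (Metric.isOpen_ball.mem_nhds ht) ih
    rw [this.deriv_eq, ((vv_t b t z (mem_slit b hb t ht) (2 * n)).const_mul _).deriv]
    rw [show 2 * (n + 1) = 2 * n + 2 by ring]
    ring

/-- For `g(z) = exp(az²/2)`, `f(z) = exp(bz²/2)` with `a, b > 0`, `ab < 1`:
`g(d/dz) f = ∑_k (a/2)^k/k! · f^{(2k)} = (1-ab)^{-1/2} exp((b/(2(1-ab))) z²)`. -/
theorem stmt_11 (a b : ℝ) (ha : 0 < a) (hb : 0 < b) (hab : a * b < 1) (z : ℂ) :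
    HasSum
      (fun k : ℕ => (((a / 2 : ℂ) ^ k / (Nat.factorial k : ℂ))) *
        iteratedDeriv (2 * k) (fun w : ℂ => Complex.exp ((b : ℂ) * w ^ 2 / 2)) z)
      (((Real.sqrt (1 - a * b) : ℝ) : ℂ)⁻¹ *
        Complex.exp (((b : ℂ) / (2 * (1 - (a : ℂ) * (b : ℂ)))) * z ^ 2)) := by
  have hd : DifferentiableOn ℂ (fun s => vv b s z 0) (Metric.ball (0 : ℂ) (1 / b)) :=
    fun t ht => (vv_t b t z (mem_slit b hb t ht) 0).differentiableAt.differentiableWithinAt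
  have hmem : (a : ℂ) ∈ Metric.ball (0 : ℂ) (1 / b) := by
    simp only [Metric.mem_ball, dist_zero_right, Complex.norm_real, Real.norm_eq_abs, abs_of_pos ha]
    rwa [lt_div_iff₀ hb]
  have h0 : (0 : ℂ) ∈ Metric.ball (0 : ℂ) (1 / b) := Metric.mem_ball_self (by positivity)
  have H := Complex.hasSum_taylorSeries_on_ball hd hmem
  have hf : (fun w : ℂ => Complex.exp ((b : ℂ) * w ^ 2 / 2)) = fun w => vv b 0 w 0 := by
    funext w
    simp [vv, uu]
  rw [hf]
  simp only [iter_z]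
  convert H using 1
  · rfl
  · funext k
    rw [iter_t b hb z k 0 h0]
    simp only [smul_eq_mul, sub_zero]
    rw [one_div, div_eq_mul_inv, div_eq_mul_inv, mul_pow]
    ring
  · simp only [vv, uu]
    have hp : 0 < 1 - a * b := by linarith
    rw [Complex.exp_add]
    congr 1
    · rw [show (1 - (a : ℂ) * b) = ((1 - a * b : ℝ) : ℂ) by push_cast; ring,
        ← Complex.ofReal_log hp.le, ← Complex.ofReal_inv]
      rw [show (-((Real.log (1 - a * b) : ℝ) : ℂ) / 2) = ((-(Real.log (1 - a * b) / 2) : ℝ) : ℂ) by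
        push_cast; ring, ← Complex.ofReal_exp, Real.exp_neg, ← Real.log_sqrt hp.le,
        Real.exp_log (Real.sqrt_pos.2 hp)]
    · congr 1
      rw [div_eq_mul_inv, mul_inv]
      ring
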